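/- Let R be a commutative Noetherian ring, let S be a finitely generated commutative R-algebra, and let M be a finitely generated S-module. Then the set of prime ideals 𝔮 of S such that the localization M_𝔮 is flat as an R-module (via the structure map R → S → S_𝔮) is an open subset of the prime spectrum Spec S with its Zariski topology. -/

import Mathlib

/-!
Flatness at `𝔮` says that no `Tor₁ᴿ(M, R/I)` is supported at `𝔮`, so the flat locus is stable under
generalization; as `Spec S` is Noetherian, it is open once it is a neighbourhood of each of its
points `𝔮` inside `V(𝔮)`. Let `p = 𝔮 ∩ R`. At a prime of `V(𝔮)`, Noetherian induction on `I`
and Nakayama's lemma reduce flatness to the vanishing of `Tor₁ᴿ(M, R/I)` for `I ⊇ p` only, which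
follows from the vanishing of `Tor₁ᴿ(M, R/p)` and the flatness of `M/pM` over `R/p`. The first holds
near `𝔮` because `Tor₁ᴿ(M, R/p)` is a finite `S`-module; the second holds over a neighbourhood of
the generic point of `Spec R/p` by generic flatness.

Generic flatness passes from `B` to `B[X]`: if `N₀` generates `N` over `B[X]`, the `B`-submodules
`Fᵢ = ∑_{j < i} Xʲ N₀` have successive quotients `Fᵢ₊₁ / Fᵢ = N₀ / Lᵢ` with `Lᵢ` increasing, so only
finitely many `B`-modules occur.
-/

open TensorProduct Topology

theorem isOpen_of_stableUnderGeneralization_of_mem_nhdsWithin {X : Type*} [TopologicalSpace X]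
    [TopologicalSpace.NoetherianSpace X] [QuasiSober X] {U : Set X}
    (hgen : StableUnderGeneralization U) (hU : ∀ x ∈ U, U ∈ 𝓝[closure {x}] x) : IsOpen U := by
  have hclosure {Z : Set X} (hZ : IsIrreducible Z) (hZU : Disjoint Z U) :
      Disjoint (closure Z) U := by
    obtain ⟨z, hz⟩ := QuasiSober.sober hZ.closure isClosed_closure
    suffices z ∉ U from
      Set.disjoint_left.2 fun y hy hyU ↦ this (hgen (hz.specializes hy) hyU)
    intro hzU
    obtain ⟨O, hO, hzO, hOU⟩ := mem_nhdsWithin.1 (hU z hzU)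
    obtain ⟨y, hyO, hyZ⟩ := mem_closure_iff.1 hz.mem O hO hzO
    exact Set.disjoint_left.1 hZU hyZ (hOU ⟨hyO, hz.def ▸ subset_closure hyZ⟩)
  rw [← isClosed_compl_iff]
  have hcompl : Uᶜ = ⋃ Z ∈ irreducibleComponents ↥Uᶜ, closure (Subtype.val '' Z) := by
    refine Set.Subset.antisymm (fun y hy ↦ ?_) (Set.iUnion₂_subset fun Z hZ ↦ ?_)
    · exact Set.mem_biUnion (irreducibleComponent_mem_irreducibleComponents ⟨y, hy⟩)
        (subset_closure ⟨⟨y, hy⟩, mem_irreducibleComponent, rfl⟩)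
    · refine Set.subset_compl_iff_disjoint_right.2 (hclosure
        (hZ.1.image _ continuous_subtype_val.continuousOn) ?_)
      exact Set.subset_compl_iff_disjoint_right.1 (Subtype.coe_image_subset _ _)
  rw [hcompl]
  exact TopologicalSpace.NoetherianSpace.finite_irreducibleComponents.isClosed_biUnion
    fun _ _ ↦ isClosed_closure

section FlatLocus

theorem injective_isLocalizedModule_map_iff {S M N M' N' : Type*} [CommRing S] [AddCommGroup M]
    [Module S M] [AddCommGroup N] [Module S N] [AddCommGroup M'] [Module S M'] [AddCommGroup N']
    [Module S N'] (W : Submonoid S) (f : M →ₗ[S] M') (g : N →ₗ[S] N') [IsLocalizedModule W f]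
    [IsLocalizedModule W g] (h : M →ₗ[S] N) :
    Function.Injective (IsLocalizedModule.map W f g h) ↔
      ∀ x ∈ LinearMap.ker h, ∃ w ∈ W, w • x = 0 := by
  rw [← LinearMap.ker_eq_bot, LinearMap.ker_localizedMap_eq_localized₀_ker W f g h,
    ← Submodule.subsingleton_iff_eq_bot,
    IsLocalizedModule.subsingleton_iff W (Submodule.toLocalized₀ W f (LinearMap.ker h))]
  simp [Subtype.ext_iff]

variable (R S M : Type*) [CommRing R] [CommRing S] [Algebra R S] [AddCommGroup M] [Module R M]
  [Module S M] [IsScalarTower R S M]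

/-- The `S`-module `Tor₁ᴿ(M, R/I)`, realised as the kernel of `M ⊗[R] I → M ⊗[R] R`. -/
def torOne (I : Ideal R) : Submodule S (M ⊗[R] I) :=
  LinearMap.ker (AlgebraTensorModule.lTensor S M I.subtype)

/-- The set of primes of `S` at which the localization of `M` is flat over `R`. -/
def flatLocus : Set (PrimeSpectrum S) :=
  {q | Module.Flat R (LocalizedModule q.asIdeal.primeCompl M)}

variable {R S M}

theorem mem_flatLocus_iff {q : PrimeSpectrum S} : q ∈ flatLocus R S M ↔
    ∀ (I : Ideal R), ∀ x ∈ torOne R S M I, ∃ s ∉ q.asIdeal, s • x = 0 := by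
  let f := LocalizedModule.mkLinearMap q.asIdeal.primeCompl M
  refine Module.Flat.iff_lTensor_injective'.trans (forall_congr' fun I ↦ ?_)
  rw [← AlgebraTensorModule.coe_lTensor (A := S),
    ← IsLocalizedModule.map_lTensor (S := q.asIdeal.primeCompl) (f := I.subtype) (g := f)]
  exact injective_isLocalizedModule_map_iff ..

theorem mem_flatLocus_iff_notMem_support {q : PrimeSpectrum S} :
    q ∈ flatLocus R S M ↔ ∀ I : Ideal R, q ∉ Module.support S (torOne R S M I) := by
  simp [mem_flatLocus_iff, Module.notMem_support_iff', Subtype.ext_iff]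

theorem stableUnderGeneralization_flatLocus : StableUnderGeneralization (flatLocus R S M) := by
  intro q q' h hq
  rw [mem_flatLocus_iff_notMem_support] at hq ⊢
  exact fun I hI ↦ hq I (Module.mem_support_mono ((PrimeSpectrum.le_iff_specializes _ _).2 h) hI)

variable {N P : Type*} [AddCommGroup N] [Module R N] [Module S N] [IsScalarTower R S N]
  [AddCommGroup P] [Module R P] [Module S P] [IsScalarTower R S P] {q : PrimeSpectrum S}

theorem lTensor_rTensor (f : M →ₗ[S] N) (I : Ideal R) (x : M ⊗[R] I) :
    AlgebraTensorModule.lTensor S N I.subtype (AlgebraTensorModule.rTensor R I f x) =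
      AlgebraTensorModule.rTensor R R f (AlgebraTensorModule.lTensor S M I.subtype x) := by
  induction x with
  | zero => simp only [map_zero]
  | tmul m r => rfl
  | add x y hx hy => simp only [map_add, hx, hy]

theorem rTensor_mem_torOne (f : M →ₗ[S] N) {I : Ideal R} {x : M ⊗[R] I}
    (hx : x ∈ torOne R S M I) : AlgebraTensorModule.rTensor R I f x ∈ torOne R S N I := by
  rw [torOne, LinearMap.mem_ker] at hx ⊢
  rw [lTensor_rTensor, hx, map_zero]

theorem rTensor_mem_torOne_iff {f : M →ₗ[S] N} (hf : Function.Injective f) {I : Ideal R}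
    {x : M ⊗[R] I} : AlgebraTensorModule.rTensor R I f x ∈ torOne R S N I ↔ x ∈ torOne R S M I := by
  have hfR : Function.Injective (AlgebraTensorModule.rTensor R R f) :=
    Module.Flat.rTensor_preserves_injective_linearMap (M := R) (f.restrictScalars R) hf
  rw [torOne, torOne, LinearMap.mem_ker, LinearMap.mem_ker, lTensor_rTensor,
    map_eq_zero_iff _ hfR]

theorem mem_flatLocus_of_exact {f : M →ₗ[S] N} {g : N →ₗ[S] P} (hf : Function.Injective f)
    (hfg : Function.Exact f g) (hg : Function.Surjective g) (hM : q ∈ flatLocus R S M)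
    (hP : q ∈ flatLocus R S P) : q ∈ flatLocus R S N := by
  rw [mem_flatLocus_iff] at hM hP ⊢
  intro I x hx
  have hexact : Function.Exact (AlgebraTensorModule.rTensor R I f)
      (AlgebraTensorModule.rTensor R I g) :=
    rTensor_exact I (f := f.restrictScalars R) (g := g.restrictScalars R) hfg hg
  obtain ⟨s, hs, hsx⟩ := hP I _ (rTensor_mem_torOne g hx)
  obtain ⟨y, hy⟩ := (hexact (s • x)).1 (by rw [map_smul, hsx])
  obtain ⟨t, ht, hty⟩ := hM I y <| (rTensor_mem_torOne_iff hf).1 <|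
    hy ▸ Submodule.smul_mem _ s hx
  refine ⟨t * s, q.asIdeal.primeCompl.mul_mem ht hs, ?_⟩
  rw [mul_smul, ← hy, ← map_smul, hty, map_zero]

theorem flatLocus_congr (e : M ≃ₗ[S] N) : flatLocus R S M = flatLocus R S N := by
  ext q
  let eq := IsLocalizedModule.mapEquiv q.asIdeal.primeCompl
    (LocalizedModule.mkLinearMap q.asIdeal.primeCompl M)
    (LocalizedModule.mkLinearMap q.asIdeal.primeCompl N)
    (Localization q.asIdeal.primeCompl) e
  exact Module.Flat.equiv_iff (eq.restrictScalars R)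

theorem mem_flatLocus_of_iSup_eq_top {ι : Type*} [Nonempty ι] {F : ι → Submodule S M}
    (hF : Directed (· ≤ ·) F) (htop : ⨆ i, F i = ⊤) (h : ∀ i, q ∈ flatLocus R S (F i)) :
    q ∈ flatLocus R S M := by
  rw [mem_flatLocus_iff]
  intro I x hx
  let G (K : Submodule S M) : Submodule S (M ⊗[R] I) :=
    LinearMap.range (AlgebraTensorModule.rTensor R I K.subtype)
  have hGmono : Monotone G := fun K L hKL ↦ by
    dsimp only [G]
    rw [← Submodule.subtype_comp_inclusion _ _ hKL, AlgebraTensorModule.rTensor_comp]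
    exact LinearMap.range_comp_le_range _ _
  have hGtop : ⨆ i, G (F i) = ⊤ := by
    refine eq_top_iff.2 fun z _ ↦ ?_
    induction z with
    | zero => exact zero_mem _
    | tmul m r =>
      obtain ⟨i, hi⟩ := (Submodule.mem_iSup_of_directed F hF).1 (htop ▸ Submodule.mem_top : m ∈ _)
      exact Submodule.mem_iSup_of_mem i ⟨⟨m, hi⟩ ⊗ₜ r, rfl⟩
    | add y z hy hz => exact add_mem (hy trivial) (hz trivial)
  obtain ⟨i, y, rfl⟩ := (Submodule.mem_iSup_of_directed _ (hF.mono_comp _ hGmono)).1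
    (hGtop ▸ Submodule.mem_top : x ∈ _)
  obtain ⟨s, hs, hsy⟩ := mem_flatLocus_iff.1 (h i) I y
    ((rTensor_mem_torOne_iff (F i).subtype_injective).1 hx)
  exact ⟨s, hs, by rw [← map_smul, hsy, map_zero]⟩

theorem mem_flatLocus_sup_range {K : Submodule S M} {θ : P →ₗ[S] M} (hK : q ∈ flatLocus R S K)
    (hP : q ∈ flatLocus R S (P ⧸ K.comap θ)) :
    q ∈ flatLocus R S ↥(K ⊔ LinearMap.range θ) := by
  let K' := K.submoduleOf (K ⊔ LinearMap.range θ)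
  let ψ : P →ₗ[S] ↥(K ⊔ LinearMap.range θ) ⧸ K' := K'.mkQ ∘ₗ
    θ.codRestrict _ fun v ↦ Submodule.mem_sup_right ⟨v, rfl⟩
  have hker : K.comap θ = LinearMap.ker ψ := by
    rw [LinearMap.ker_comp, Submodule.ker_mkQ]
    rfl
  have hψ : Function.Surjective ψ := by
    intro z
    obtain ⟨⟨y, hy⟩, rfl⟩ := Submodule.mkQ_surjective _ z
    obtain ⟨k, hk, _, ⟨v, rfl⟩, rfl⟩ := Submodule.mem_sup.1 hy
    refine ⟨v, (Submodule.Quotient.eq' K').2 ?_⟩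
    change -θ v + (k + θ v) ∈ K
    rwa [neg_add_cancel_comm_assoc]
  let e := Submodule.quotEquivOfEq _ _ hker ≪≫ₗ ψ.quotKerEquivOfSurjective hψ
  refine mem_flatLocus_of_exact (Submodule.inclusion_injective le_sup_left) ?_
    (Submodule.mkQ_surjective K') hK ((flatLocus_congr (R := R) e).subset hP)
  rw [LinearMap.exact_iff, Submodule.ker_mkQ, Submodule.range_inclusion]
  rfl

theorem mem_flatLocus_of_iSup_range_eq_top {θ : ℕ → P →ₗ[S] M}
    (htop : ⨆ i, LinearMap.range (θ i) = ⊤)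
    (h : ∀ i, q ∈ flatLocus R S (P ⧸ (⨆ j < i, LinearMap.range (θ j)).comap (θ i))) :
    q ∈ flatLocus R S M := by
  let F (i : ℕ) : Submodule S M := ⨆ j < i, LinearMap.range (θ j)
  have hF_succ (i : ℕ) : F (i + 1) = F i ⊔ LinearMap.range (θ i) := Nat.iSup_lt_succ _ i
  have hF : Monotone F := monotone_nat_of_le_succ fun i ↦ hF_succ i ▸ le_sup_left
  refine mem_flatLocus_of_iSup_eq_top hF.directed_le ?_ fun i ↦ ?_
  · exact eq_top_iff.2 <| htop ▸ iSup_le fun i ↦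
      le_iSup_of_le (i + 1) (hF_succ i ▸ le_sup_right)
  · induction i with
    | zero =>
      have : F 0 = ⊥ := by simp [F]
      rw [this, mem_flatLocus_iff]
      exact fun I x _ ↦ ⟨1, q.asIdeal.primeCompl.one_mem, Subsingleton.elim _ _⟩
    | succ i ih => exact hF_succ i ▸ mem_flatLocus_sup_range ih (h i)

end FlatLocus

section LocalCriterion

variable {R S M : Type*} [CommRing R] [CommRing S] [Algebra R S] [AddCommGroup M] [Module R M]
  [Module S M] [IsScalarTower R S M]

theorem finite_torOne [IsNoetherianRing R] [IsNoetherianRing S] [Module.Finite S M] (I : Ideal R) :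
    Module.Finite S (torOne R S M I) := by
  have : Module.Finite S (M ⊗[R] I) := .equiv (AlgebraTensorModule.cancelBaseChange R S S M I)
  infer_instance

-- The part of the long exact sequence of `0 → R/J → R/I → R/(I + aR) → 0` with `J = (I : a)`.
theorem exists_torOne_colon {I J : Ideal R} {a : R} (φ : J →ₗ[R] I) (hφ : ∀ r, (φ r : R) = a * r)
    (hJ : ∀ r, a * r ∈ I → r ∈ J) {x : M ⊗[R] I}
    (hx : LinearMap.lTensor M (Submodule.inclusion (le_sup_left : I ≤ I ⊔ Ideal.span {a})) x = 0) :
    ∃ w ∈ torOne R S M J, LinearMap.lTensor M φ w = x := by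
  let a' : ↥(I ⊔ Ideal.span {a}) := ⟨a, Ideal.mem_sup_right (Ideal.mem_span_singleton_self a)⟩
  let α : J →ₗ[R] R × I := LinearMap.prod J.subtype φ
  let β : R × I →ₗ[R] ↥(I ⊔ Ideal.span {a}) := LinearMap.coprod
    (-LinearMap.toSpanSingleton R _ a') (Submodule.inclusion le_sup_left)
  have hβ : Function.Surjective β := by
    rintro ⟨y, hy⟩
    obtain ⟨i, hi, z, hz, rfl⟩ := Submodule.mem_sup.1 hy
    obtain ⟨r, rfl⟩ := Ideal.mem_span_singleton'.1 hz
    refine ⟨(-r, ⟨i, hi⟩), Subtype.ext ?_⟩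
    simp [β, a', add_comm]
  have hαβ : Function.Exact α β := by
    rintro ⟨r, i⟩
    have hβri : β (r, i) = 0 ↔ (i : R) = a * r := by
      rw [← Subtype.coe_inj, ← sub_eq_zero (a := (i : R))]
      simp [β, a', mul_comm a, neg_add_eq_sub]
    refine hβri.trans ⟨fun h ↦ ⟨⟨r, hJ r (h ▸ i.2)⟩, ?_⟩, ?_⟩
    · exact Prod.ext rfl (Subtype.ext ((hφ _).trans h.symm))
    · rintro ⟨j, hj⟩
      obtain ⟨rfl, rfl⟩ := Prod.ext_iff.1 hj
      exact hφ j
  obtain ⟨w, hw⟩ := (lTensor_exact M hαβ hβ (LinearMap.lTensor M (LinearMap.inr R R I) x)).1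
    (by rw [← LinearMap.lTensor_comp_apply, LinearMap.coprod_inr, hx])
  refine ⟨w, ?_, ?_⟩
  · have := congrArg (LinearMap.lTensor M (LinearMap.fst R R I)) hw
    rwa [← LinearMap.lTensor_comp_apply, ← LinearMap.lTensor_comp_apply, LinearMap.fst_comp_inr,
      LinearMap.lTensor_zero, LinearMap.fst_prod] at this
  · have := congrArg (LinearMap.lTensor M (LinearMap.snd R R I)) hw
    rwa [← LinearMap.lTensor_comp_apply, ← LinearMap.lTensor_comp_apply, LinearMap.snd_comp_inr,
      LinearMap.lTensor_id, LinearMap.snd_prod] at this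

theorem exists_lTensor_eq_smul_of_notMem_support {q : PrimeSpectrum S} {I J : Ideal R} {a : R}
    (hq : q ∉ Module.support S (torOne R S M (I ⊔ Ideal.span {a}))) (φ : J →ₗ[R] I)
    (hφ : ∀ r, (φ r : R) = a * r) (hJ : ∀ r, a * r ∈ I → r ∈ J) (x : torOne R S M I) :
    ∃ s ∉ q.asIdeal, ∃ w : torOne R S M J,
      AlgebraTensorModule.lTensor S M φ w = s • (x : M ⊗[R] I) := by
  let π := AlgebraTensorModule.lTensor S M
    (Submodule.inclusion (le_sup_left : I ≤ I ⊔ Ideal.span {a}))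
  have hπx : π x ∈ torOne R S M (I ⊔ Ideal.span {a}) :=
    (LinearMap.lTensor_comp_apply M _ _ _).symm.trans x.2
  obtain ⟨s, hs, hsx⟩ := Module.notMem_support_iff'.1 hq ⟨π x, hπx⟩
  obtain ⟨w, hw, hwx⟩ := exists_torOne_colon (S := S) φ hφ hJ
    ((π.map_smul s x).trans (congrArg Subtype.val hsx))
  exact ⟨s, hs, ⟨w, hw⟩, hwx⟩

theorem notMem_support_of_forall_exists_smul_eq_smul {T : Type*} [AddCommGroup T] [Module S T]
    [Module.Finite S T] {q : PrimeSpectrum S} {a : S} (ha : a ∈ q.asIdeal)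
    (h : ∀ x : T, ∃ s ∉ q.asIdeal, ∃ y, s • x = a • y) : q ∉ Module.support S T := by
  have hquot : q ∉ Module.support S (QuotSMulTop a T) := by
    refine Module.notMem_support_iff'.2 fun z ↦ ?_
    obtain ⟨x, rfl⟩ := Submodule.mkQ_surjective _ z
    obtain ⟨s, hs, y, hy⟩ := h x
    refine ⟨s, hs, ?_⟩
    rw [← map_smul, hy, Submodule.mkQ_apply, Submodule.Quotient.mk_eq_zero]
    exact Submodule.smul_mem_pointwise_smul y a ⊤ trivial
  rw [Module.support_quotSMulTop] at hquot
  exact fun hq ↦ hquot ⟨hq, Set.singleton_subset_iff.2 ha⟩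

variable [IsNoetherianRing R] [IsNoetherianRing S] [Module.Finite S M] {q : PrimeSpectrum S}

theorem notMem_support_torOne_of_lt {I : Ideal R} {a : R} (ha : algebraMap R S a ∈ q.asIdeal)
    (haI : a ∉ I) (ih : ∀ J, I < J → q ∉ Module.support S (torOne R S M J)) :
    q ∉ Module.support S (torOne R S M I) := by
  have hlt : I < I ⊔ Ideal.span {a} := left_lt_sup.2 fun h ↦
    haI (h (Ideal.mem_span_singleton_self a))
  have hmem (r : R) : r ∈ I.colon {a} ↔ a * r ∈ I := by
    rw [Submodule.mem_colon_singleton, smul_eq_mul, mul_comm]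
  have hle : I ≤ I.colon {a} := fun r hr ↦ (hmem r).2 (I.mul_mem_left a hr)
  rcases hle.eq_or_lt with hJ | hJ
  · have hfin := finite_torOne (M := M) (S := S) I
    refine notMem_support_of_forall_exists_smul_eq_smul ha fun x ↦ ?_
    obtain ⟨s, hs, w, hwx⟩ := exists_lTensor_eq_smul_of_notMem_support (ih _ hlt)
      (a • LinearMap.id) (fun _ ↦ rfl) (fun r hr ↦ hJ.ge ((hmem r).2 hr)) x
    refine ⟨s, hs, w, Subtype.ext ?_⟩
    rw [AlgebraTensorModule.coe_lTensor, LinearMap.lTensor_smul, LinearMap.lTensor_id,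
      LinearMap.smul_apply, LinearMap.id_apply] at hwx
    exact hwx.symm.trans (algebraMap_smul S a (w : M ⊗[R] I)).symm
  · refine Module.notMem_support_iff'.2 fun x ↦ ?_
    obtain ⟨s, hs, w, hwx⟩ := exists_lTensor_eq_smul_of_notMem_support (ih _ hlt)
      ((LinearMap.mulLeft R a).restrict fun r hr ↦ (hmem r).1 hr) (fun _ ↦ rfl)
      (fun r ↦ (hmem r).2) x
    obtain ⟨t, ht, htw⟩ := Module.notMem_support_iff'.1 (ih _ hJ) w
    refine ⟨t * s, q.asIdeal.primeCompl.mul_mem ht hs, Subtype.ext ?_⟩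
    rw [mul_smul, Submodule.coe_smul, Submodule.coe_smul, ← hwx, ← map_smul, ← Submodule.coe_smul,
      htw, Submodule.coe_zero, map_zero, Submodule.coe_zero]

theorem mem_flatLocus_of_forall_notMem_support_torOne {p : Ideal R}
    (hpq : p ≤ q.asIdeal.comap (algebraMap R S))
    (h : ∀ I, p ≤ I → q ∉ Module.support S (torOne R S M I)) : q ∈ flatLocus R S M := by
  rw [mem_flatLocus_iff_notMem_support]
  intro I
  induction I using WellFoundedGT.induction with
  | ind I ih =>
    by_cases hI : p ≤ I
    · exact h I hI
    · obtain ⟨a, ha, haI⟩ := SetLike.not_le_iff_exists.1 hI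
      exact notMem_support_torOne_of_lt (hpq ha) haI ih

end LocalCriterion

section LocalCriterionBaseChange

variable {R S M : Type*} [CommRing R] [CommRing S] [Algebra R S] [AddCommGroup M] [Module R M]
  [Module S M] [IsScalarTower R S M] {A : Type*} [CommRing A] [Algebra R A] {P : PrimeSpectrum A}

theorem exists_smul_eq_zero_of_mem_flatLocus_tensorProduct
    (hA : Function.Surjective (algebraMap R A))
    (hP : P ∈ flatLocus A A (A ⊗[R] M)) {V : Ideal A} {z : M ⊗[R] V}
    (hz : LinearMap.lTensor M (V.subtype.restrictScalars R) z = 0) :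
    ∃ r, algebraMap R A r ∉ P.asIdeal ∧ r • z = 0 := by
  let e (W : Type _) [AddCommGroup W] [Module A W] [Module R W] [IsScalarTower R A W] :
      W ⊗[R] M ≃ₗ[A] (A ⊗[R] M) ⊗[A] W :=
    (AlgebraTensorModule.cancelBaseChange R A A W M).symm ≪≫ₗ TensorProduct.comm A _ _
  have hnat : LinearMap.lTensor (A ⊗[R] M) V.subtype (e V (TensorProduct.comm R M V z)) =
      e A (TensorProduct.comm R M A (LinearMap.lTensor M (V.subtype.restrictScalars R) z)) := by
    clear hz
    induction z with
    | zero => simp only [map_zero]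
    | tmul v m => simp [e]
    | add x y hx hy => simp only [map_add, hx, hy]
  obtain ⟨a, ha, haz⟩ := mem_flatLocus_iff.1 hP V (e V (TensorProduct.comm R M V z))
    (hnat.trans (by rw [hz, map_zero, map_zero]))
  obtain ⟨r, rfl⟩ := hA a
  refine ⟨r, ha, ?_⟩
  rwa [← map_smul, LinearEquiv.map_eq_zero_iff, algebraMap_smul, ← map_smul,
    LinearEquiv.map_eq_zero_iff] at haz

theorem exists_lTensor_inclusion_eq_smul (hA : Function.Surjective (algebraMap R A))
    (hP : P ∈ flatLocus A A (A ⊗[R] M)) {I : Ideal R} (hI : RingHom.ker (algebraMap R A) ≤ I)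
    {x : M ⊗[R] I} (hx : x ∈ torOne R S M I) :
    ∃ r, algebraMap R A r ∉ P.asIdeal ∧ ∃ y : torOne R S M (RingHom.ker (algebraMap R A)),
      LinearMap.lTensor M (Submodule.inclusion hI) y = r • x := by
  have hxI : LinearMap.lTensor M I.subtype x = 0 := hx
  have hπ : Function.Surjective (Algebra.idealMap A I) := by
    rintro ⟨v, hv⟩
    obtain ⟨i, hi, rfl⟩ := (Ideal.mem_map_iff_of_surjective _ hA).1 hv
    exact ⟨⟨i, hi⟩, rfl⟩
  have hexact : Function.Exact (Submodule.inclusion hI) (Algebra.idealMap A I) := fun i ↦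
    Subtype.ext_iff.trans ⟨fun h ↦ ⟨⟨i, h⟩, rfl⟩, fun ⟨y, hy⟩ ↦ hy ▸ y.2⟩
  have hcomp : (I.map (algebraMap R A)).subtype.restrictScalars R ∘ₗ Algebra.idealMap A I =
      Algebra.linearMap R A ∘ₗ I.subtype := rfl
  obtain ⟨r, hr, hrx⟩ := exists_smul_eq_zero_of_mem_flatLocus_tensorProduct hA hP
    (z := LinearMap.lTensor M (Algebra.idealMap A I) x) (by
      rw [← LinearMap.lTensor_comp_apply, hcomp, LinearMap.lTensor_comp_apply, hxI, map_zero])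
  rw [← map_smul] at hrx
  obtain ⟨y, hy⟩ := (lTensor_exact M hexact hπ _).1 hrx
  have hyI : LinearMap.lTensor M (RingHom.ker (algebraMap R A)).subtype y = 0 := by
    rw [← Submodule.subtype_comp_inclusion _ _ hI, LinearMap.lTensor_comp_apply, hy, map_smul,
      hxI, smul_zero]
  exact ⟨r, hr, ⟨y, hyI⟩, hy⟩

variable [IsNoetherianRing R] [IsNoetherianRing S] [Module.Finite S M] {q : PrimeSpectrum S}

theorem mem_flatLocus_of_tensorProduct (hA : Function.Surjective (algebraMap R A))
    (hP : P ∈ flatLocus A A (A ⊗[R] M))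
    (hPq : P.comap (algebraMap R A) = q.comap (algebraMap R S))
    (hq : q ∉ Module.support S (torOne R S M (RingHom.ker (algebraMap R A)))) :
    q ∈ flatLocus R S M := by
  have hmem (r : R) : algebraMap R A r ∈ P.asIdeal ↔ algebraMap R S r ∈ q.asIdeal :=
    SetLike.ext_iff.1 (congrArg PrimeSpectrum.asIdeal hPq) r
  refine mem_flatLocus_of_forall_notMem_support_torOne (p := RingHom.ker (algebraMap R A))
    (fun r hr ↦ (hmem r).1 ?_) fun I hI ↦ Module.notMem_support_iff'.2 fun x ↦ ?_
  · rw [RingHom.mem_ker.1 hr]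
    exact zero_mem _
  · obtain ⟨r, hr, y, hy⟩ := exists_lTensor_inclusion_eq_smul hA hP hI x.2
    obtain ⟨s, hs, hsy⟩ := Module.notMem_support_iff'.1 hq y
    refine ⟨s * algebraMap R S r, q.asIdeal.primeCompl.mul_mem hs (mt (hmem r).2 hr),
      Subtype.ext ?_⟩
    rw [mul_smul, Submodule.coe_smul, Submodule.coe_smul, algebraMap_smul, ← hy,
      ← AlgebraTensorModule.coe_lTensor (A := S), ← map_smul, ← Submodule.coe_smul, hsy,
      Submodule.coe_zero, map_zero, Submodule.coe_zero]

end LocalCriterionBaseChange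

section GenericFlatness

universe u v w

/-- Every finite `B`-module (in universe `w`) is flat over the domain `A` at all primes in a
neighbourhood of the generic point of `Spec A`, i.e. after inverting one nonzero element. -/
def GenericFlatness (A : Type u) (B : Type v) [CommRing A] [IsDomain A] [CommRing B]
    [Algebra A B] : Prop :=
  ∀ (N : Type w) [AddCommGroup N] [Module A N] [Module B N] [IsScalarTower A B N]
    [Module.Finite B N], flatLocus A A N ∈ 𝓝 (⊥ : PrimeSpectrum A)

theorem flatLocus_mem_nhds_bot_of_finite {A N : Type*} [CommRing A] [IsDomain A]
    [IsNoetherianRing A] [AddCommGroup N] [Module A N] [Module.Finite A N] :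
    flatLocus A A N ∈ 𝓝 (⊥ : PrimeSpectrum A) := by
  have : Module.FinitePresentation A N := Module.finitePresentation_of_finite A N
  refine Filter.mem_of_superset
    ((Module.isOpen_freeLocus (M := N)).mem_nhds (Module.mem_freeLocus.2 ?_)) fun p hp ↦ ?_
  · let : Field (Localization.AtPrime (⊥ : PrimeSpectrum A).asIdeal) := IsField.toField <|
      IsLocalRing.isField_iff_maximalIdeal_eq.2 <| by
        rw [← Localization.AtPrime.map_eq_maximalIdeal]
        exact Ideal.map_bot
    exact Module.Free.of_divisionRing (Localization.AtPrime (⊥ : PrimeSpectrum A).asIdeal) _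
  · have := Module.mem_freeLocus.1 hp
    exact Module.Flat.trans A (Localization p.asIdeal.primeCompl) _

variable {A : Type u} [CommRing A] [IsDomain A] {B : Type v} [CommRing B] [Algebra A B]

theorem GenericFlatness.of_finite [IsNoetherianRing A] [Module.Finite A B] :
    GenericFlatness.{u, v, w} A B := by
  intro N _ _ _ _ _
  have : Module.Finite A N := Module.Finite.trans B N
  exact flatLocus_mem_nhds_bot_of_finite

theorem GenericFlatness.of_finite_algHom (hB : GenericFlatness.{u, v, w} A B) {C : Type*}
    [CommRing C] [Algebra A C] (f : B →ₐ[A] C) (hf : f.Finite) :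
    GenericFlatness.{u, _, w} A C := by
  intro N _ _ _ _ _
  let : Module B N := Module.compHom N f.toRingHom
  have : IsScalarTower A B N := ⟨fun a b n ↦ by
    change f (a • b) • n = a • f b • n
    rw [map_smul, smul_assoc]⟩
  let : Algebra B C := f.toAlgebra
  have : IsScalarTower B C N := .of_algebraMap_smul fun _ _ ↦ rfl
  have : Module.Finite B C := hf
  have : Module.Finite B N := Module.Finite.trans C N
  exact hB N

theorem GenericFlatness.iInter_flatLocus_quotient_mem_nhds_bot [IsNoetherianRing B]
    (hB : GenericFlatness.{u, v, w} A B) {P : Type w} [AddCommGroup P] [Module A P] [Module B P]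
    [IsScalarTower A B P] [Module.Finite B P] {L : ℕ → Submodule B P} (hL : Monotone L) :
    ⋂ i, flatLocus A A (P ⧸ L i) ∈ 𝓝 (⊥ : PrimeSpectrum A) := by
  obtain ⟨n, hn⟩ := WellFoundedGT.monotone_chain_condition ⟨L, hL⟩
  refine Filter.mem_of_superset ((Filter.biInter_mem (Set.finite_Iic n)).2 fun i _ ↦ hB (P ⧸ L i))
    fun q hq ↦ Set.mem_iInter.2 fun i ↦ ?_
  rw [Set.mem_iInter₂] at hq
  rcases le_total i n with hi | hi
  · exact hq i hi
  · have hLi : L n = L i := hn i hi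
    exact hLi ▸ hq n Set.self_mem_Iic

theorem GenericFlatness.flatLocus_mem_nhds_bot_of_iSup_range_pow [IsNoetherianRing B]
    (hB : GenericFlatness.{u, v, w} A B) {N : Type*} [AddCommGroup N] [Module A N] [Module B N]
    [IsScalarTower A B N] {P : Type w} [AddCommGroup P] [Module A P] [Module B P]
    [IsScalarTower A B P] [Module.Finite B P] (φ : P →ₗ[B] N) (f : Module.End B N)
    (htop : ⨆ i : ℕ, LinearMap.range ((f ^ i) ∘ₗ φ) = ⊤) :
    flatLocus A A N ∈ 𝓝 (⊥ : PrimeSpectrum A) := by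
  let F (i : ℕ) : Submodule B N := ⨆ j < i, LinearMap.range ((f ^ j) ∘ₗ φ)
  let L (i : ℕ) : Submodule B P := (F i).comap ((f ^ i) ∘ₗ φ)
  have hfF (i : ℕ) : F i ≤ (F (i + 1)).comap f := by
    refine iSup₂_le fun j hj ↦ ?_
    rintro _ ⟨v, rfl⟩
    refine Submodule.mem_iSup_of_mem (j + 1) (Submodule.mem_iSup_of_mem (by omega) ⟨v, ?_⟩)
    rw [pow_succ']
    rfl
  have hL : Monotone L := monotone_nat_of_le_succ fun i v hv ↦ by
    have := hfF i hv
    change (f ^ (i + 1)) (φ v) ∈ F (i + 1)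
    rw [pow_succ']
    exact this
  refine Filter.mem_of_superset (hB.iInter_flatLocus_quotient_mem_nhds_bot hL) fun q hq ↦ ?_
  refine mem_flatLocus_of_iSup_range_eq_top (θ := fun i ↦ ((f ^ i) ∘ₗ φ).restrictScalars A) ?_
    fun i ↦ ?_
  · simp only [LinearMap.range_restrictScalars, ← Submodule.restrictScalars_iSup, htop,
      Submodule.restrictScalars_top]
  · have hF : ⨆ j < i, LinearMap.range (((f ^ j) ∘ₗ φ).restrictScalars A) =
        (F i).restrictScalars A := by
      simp only [F, Submodule.restrictScalars_iSup, LinearMap.range_restrictScalars]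
    rw [hF]
    let e : (P ⧸ L i) ≃ₗ[A] P ⧸ (L i).restrictScalars A :=
      (Submodule.Quotient.restrictScalarsEquiv A (L i)).symm
    exact (flatLocus_congr (R := A) e).subset (Set.mem_iInter.1 hq i)

theorem GenericFlatness.polynomial [IsNoetherianRing B] (hB : GenericFlatness.{u, v, w} A B) :
    GenericFlatness.{u, v, w} A (Polynomial B) := by
  intro N _ _ _ _ _
  let : Module B N := Module.compHom N (Polynomial.C : B →+* Polynomial B)
  have : IsScalarTower B (Polynomial B) N := .of_algebraMap_smul fun _ _ ↦ rfl
  have : IsScalarTower A B N := ⟨fun a b n ↦ by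
    change Polynomial.C (a • b) • n = a • Polynomial.C b • n
    rw [← smul_assoc, Polynomial.smul_C]⟩
  have hX : Submodule.span B (Set.range fun i : ℕ ↦ (Polynomial.X ^ i : Polynomial B)) = ⊤ := by
    simpa only [Polynomial.coe_basisMonomials, ← Polynomial.X_pow_eq_monomial] using
      (Polynomial.basisMonomials B).span_eq
  obtain ⟨t, ht⟩ := Module.Finite.fg_top (R := Polynomial B) (M := N)
  have : Module.Finite B (Submodule.span B (t : Set N)) := .span_finset B t
  refine hB.flatLocus_mem_nhds_bot_of_iSup_range_pow (Submodule.span B (t : Set N)).subtype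
    (Algebra.lsmul B B N (Polynomial.X : Polynomial B)) (top_le_iff.1 ?_)
  have hspan := Submodule.span_smul_of_span_eq_top hX (t : Set N)
  rw [ht, Submodule.restrictScalars_top] at hspan
  rw [← hspan, Submodule.span_le]
  rintro _ ⟨_, ⟨i, rfl⟩, y, hy, rfl⟩
  refine Submodule.mem_iSup_of_mem i ⟨⟨y, Submodule.subset_span hy⟩, ?_⟩
  rw [← map_pow]
  rfl

theorem GenericFlatness.mvPolynomial [IsNoetherianRing A] (n : ℕ) :
    GenericFlatness.{u, u, w} A (MvPolynomial (Fin n) A) := by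
  induction n with
  | zero =>
    have e := (MvPolynomial.isEmptyAlgEquiv A (Fin 0)).symm
    have : Module.Finite A (MvPolynomial (Fin 0) A) := .equiv e.toLinearEquiv
    exact .of_finite
  | succ n ih =>
    have e := (MvPolynomial.finSuccEquiv A n).symm
    exact ih.polynomial.of_finite_algHom e.toAlgHom (.of_surjective _ e.surjective)

theorem GenericFlatness.of_finiteType [IsNoetherianRing A] [Algebra.FiniteType A B] :
    GenericFlatness.{u, v, w} A B := by
  obtain ⟨n, f, hf⟩ := Algebra.FiniteType.iff_quotient_mvPolynomial''.1 ‹Algebra.FiniteType A B›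
  exact (GenericFlatness.mvPolynomial n).of_finite_algHom f (.of_surjective f hf)

attribute [local instance] Algebra.TensorProduct.rightAlgebra in
theorem flatLocus_tensorProduct_mem_nhds_bot {R S M : Type*} [CommRing R] [CommRing S]
    [Algebra R S] [Algebra.FiniteType R S] [AddCommGroup M] [Module R M] [Module S M]
    [IsScalarTower R S M] [Module.Finite S M] (A : Type*) [CommRing A] [IsDomain A]
    [IsNoetherianRing A] [Algebra R A] :
    flatLocus A A (A ⊗[R] M) ∈ 𝓝 (⊥ : PrimeSpectrum A) := by
  have e : (A ⊗[R] S) ⊗[S] M ≃ₗ[A] A ⊗[R] M :=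
    Algebra.IsPushout.cancelBaseChange R A S (A ⊗[R] S) M
  rw [← flatLocus_congr (R := A) e]
  exact GenericFlatness.of_finiteType (B := A ⊗[R] S) ((A ⊗[R] S) ⊗[S] M)

end GenericFlatness

theorem isOpen_flatLocus {R S M : Type*} [CommRing R] [IsNoetherianRing R] [CommRing S]
    [Algebra R S] [Algebra.FiniteType R S] [AddCommGroup M] [Module R M] [Module S M]
    [IsScalarTower R S M] [Module.Finite S M] : IsOpen (flatLocus R S M) := by
  have : IsNoetherianRing S := Algebra.FiniteType.isNoetherianRing R S
  refine isOpen_of_stableUnderGeneralization_of_mem_nhdsWithin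
    stableUnderGeneralization_flatLocus fun q hq ↦ ?_
  let A := R ⧸ q.asIdeal.comap (algebraMap R S)
  let T := torOne R S M (RingHom.ker (algebraMap R A))
  have hA : Function.Surjective (algebraMap R A) := Ideal.Quotient.mk_surjective
  have hker : RingHom.ker (algebraMap R A) = q.asIdeal.comap (algebraMap R S) := Ideal.mk_ker
  have hqT : q ∉ Module.support S T := mem_flatLocus_iff_notMem_support.1 hq _
  have : Module.Finite S T := finite_torOne _
  have hT : IsClosed (Module.support S T) := by
    rw [Module.support_eq_zeroLocus]
    exact PrimeSpectrum.isClosed_zeroLocus _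
  obtain ⟨_, ⟨a, rfl⟩, ha, hflat⟩ :=
    PrimeSpectrum.isTopologicalBasis_basic_opens.mem_nhds_iff.1
      (flatLocus_tensorProduct_mem_nhds_bot (R := R) (S := S) (M := M) A)
  obtain ⟨r, rfl⟩ := hA a
  have hr : algebraMap R S r ∉ q.asIdeal := fun hrq ↦ ha (Ideal.Quotient.eq_zero_iff_mem.2 hrq)
  filter_upwards [self_mem_nhdsWithin, mem_nhdsWithin_of_mem_nhds (hT.isOpen_compl.mem_nhds hqT),
    mem_nhdsWithin_of_mem_nhds ((PrimeSpectrum.basicOpen (algebraMap R S r)).isOpen.mem_nhds hr)]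
    with q' hq' hq'T hrq'
  have hle : q ≤ q' := (PrimeSpectrum.le_iff_mem_closure _ _).2 hq'
  obtain ⟨P, hP⟩ : q'.comap (algebraMap R S) ∈
      Set.range (PrimeSpectrum.comap (algebraMap R A)) := by
    rw [range_comap_of_surjective _ _ hA, PrimeSpectrum.mem_zeroLocus, hker]
    exact Ideal.comap_mono hle
  refine mem_flatLocus_of_tensorProduct hA (hflat fun hrP ↦ hrq' ?_) hP hq'T
  exact (SetLike.ext_iff.1 (congrArg PrimeSpectrum.asIdeal hP) r).1 hrP

/-- **Openness of the flat locus** (commutative-algebra content of Lemma 2.3(1)(i)):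
if `R` is a commutative Noetherian ring, `S` a finitely generated commutative `R`-algebra
and `M` a finitely generated `S`-module, then the set of primes `𝔮` of `S` such that the
localization `M_𝔮` is flat as an `R`-module (via `R → S → S_𝔮`) is open in `Spec S`. -/
theorem flatLocus_isOpen (R S : Type*) [CommRing R] [IsNoetherianRing R]
    [CommRing S] [Algebra R S] [Algebra.FiniteType R S]
    (M : Type*) [AddCommGroup M] [Module S M] [Module.Finite S M] :
    IsOpen {q : PrimeSpectrum S |
      Module.Flat R (RestrictScalars R S (LocalizedModule q.asIdeal.primeCompl M))} := by
  let : Module R M := Module.compHom M (algebraMap R S)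
  have : IsScalarTower R S M := IsScalarTower.of_algebraMap_smul fun _ _ ↦ rfl
  convert! isOpen_flatLocus (R := R) (S := S) (M := M) using 1
  ext q
  let e : RestrictScalars R S (LocalizedModule q.asIdeal.primeCompl M) ≃ₗ[R]
      LocalizedModule q.asIdeal.primeCompl M :=
    { RestrictScalars.addEquiv R S (LocalizedModule q.asIdeal.primeCompl M) with
      map_smul' := fun r x ↦ algebraMap_smul S r (RestrictScalars.addEquiv R S _ x) }
  exact Module.Flat.equiv_iff e
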